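/- Let (Ω, μ) be a measure space, 1 ≤ p < ∞, K a Hilbert space, and T : Lᵖ(Ω) → Lᵖ(Ω) a bounded linear operator. Then the algebraic tensor extension T ⊗ I_K, defined on simple tensors by (T ⊗ I_K)(f ⊗ k) = (Tf) ⊗ k, extends to a bounded operator on the Bochner space Lᵖ(Ω; K) whose norm equals ‖T‖. -/

import Mathlib

open MeasureTheory
open scoped ENNReal

/-!
The proof averages over random directions. Let `E` be a finite-dimensional inner product space and
`ν` the Lebesgue measure of its unit ball. Since `ν` is invariant under isometries, there is a
constant `0 < c < ∞` such that `∫ |⟪x, g⟫| ^ p dν(g) = c ‖x‖ ^ p` for all `x : E`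
(`exists_measure_lintegral_inner`). If `F ∈ Lᵖ(Ω; K)` takes values in `E`, Tonelli's theorem turns
this into `∫ ‖⟪g, F⟫‖ₚ ^ p dν(g) = c ‖F‖ₚ ^ p` (`lintegral_enorm_innerSL_compLp`), which expresses
the norm of `F` through its scalar components `⟪g, F⟫ ∈ Lᵖ(Ω)`.

Now let `t ∈ Lᵖ(Ω) ⊗ K`. The functions `F` and `G` represented by `t` and `(T ⊗ I) t` take values
in a common finite-dimensional subspace of `K`, and `⟪g, G⟫ = T ⟪g, F⟫` for every `g`. Hence
`‖⟪g, G⟫‖ₚ ≤ ‖T‖ ‖⟪g, F⟫‖ₚ`, and integrating over `g` gives `‖G‖ₚ ≤ ‖T‖ ‖F‖ₚ`. As `Lᵖ(Ω) ⊗ K` is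
dense in `Lᵖ(Ω; K)`, the map `T ⊗ I` extends with norm at most `‖T‖`. Equality follows by testing
on `f ⊗ k` with `k ≠ 0` fixed.
-/

section Average

variable {E : Type*} [NormedAddCommGroup E] [InnerProductSpace ℝ E] [FiniteDimensional ℝ E]
  [MeasurableSpace E] [BorelSpace E]

/-- By isometry invariance, the `q`-th absolute moment of `⟪x, ·⟫` over the unit ball depends only
on the norm of `x`. -/
lemma lintegral_ball_inner_eq_of_norm_eq (q : ℝ) {x y : E} (h : ‖x‖ = ‖y‖) :
    ∫⁻ g in Metric.ball (0 : E) 1, ‖inner ℝ x g‖ₑ ^ q =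
      ∫⁻ g in Metric.ball (0 : E) 1, ‖inner ℝ y g‖ₑ ^ q := by
  -- The reflection in the hyperplane orthogonal to `x - y` exchanges `x` and `y`.
  let R : E ≃ₗᵢ[ℝ] E := (Submodule.span ℝ {x - y})ᗮ.reflection
  have hR : R x = y := Submodule.reflection_sub h
  have hpre : R ⁻¹' Metric.ball (0 : E) 1 = Metric.ball (0 : E) 1 := by
    ext g; simp
  have hmp := (R.measurePreserving.restrict_preimage
    (Metric.isOpen_ball (x := (0 : E)) (ε := 1)).measurableSet)
  rw [hpre] at hmp
  rw [← hmp.lintegral_comp (f := fun g => ‖inner ℝ y g‖ₑ ^ q) (by fun_prop)]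
  simp_rw [← hR, LinearIsometryEquiv.inner_map_map]

lemma exists_measure_lintegral_inner (q : ℝ) (hq : 0 < q) :
    ∃ ν : Measure E, IsFiniteMeasure ν ∧ ∃ c : ℝ≥0∞, c ≠ 0 ∧ c ≠ ⊤ ∧
      ∀ x : E, ∫⁻ g, ‖inner ℝ x g‖ₑ ^ q ∂ν = c * ‖x‖ₑ ^ q := by
  let B := Metric.ball (0 : E) 1
  have hB : MeasurableSet B := Metric.isOpen_ball.measurableSet
  have hfin : IsFiniteMeasure (volume.restrict B) :=
    ⟨by simpa using measure_ball_lt_top⟩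
  refine ⟨volume.restrict B, hfin, ?_⟩
  rcases subsingleton_or_nontrivial E with hE | hE
  · refine ⟨1, one_ne_zero, ENNReal.one_ne_top, fun x => ?_⟩
    simp [Subsingleton.elim x 0, hq]
  obtain ⟨u, hu⟩ := exists_norm_eq E zero_le_one
  have hu0 : u ≠ 0 := by rintro rfl; simp at hu
  refine ⟨∫⁻ g in B, ‖inner ℝ u g‖ₑ ^ q, ?_, ?_, fun x => ?_⟩
  · -- The integrand is positive on a nonempty open subset of the ball.
    have hopen : IsOpen (B ∩ {g | inner ℝ u g ≠ 0}) :=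
      Metric.isOpen_ball.inter (isOpen_ne_fun (by fun_prop) (by fun_prop))
    have hne : (B ∩ {g | inner ℝ u g ≠ 0}).Nonempty := by
      refine ⟨(1 / 2 : ℝ) • u, ?_, ?_⟩
      · simp only [B, mem_ball_zero_iff, norm_smul, hu]; norm_num
      · simp [inner_smul_right, hu0]
    have hpos := hopen.measure_pos volume hne
    intro h0
    rw [lintegral_eq_zero_iff (by fun_prop), Filter.EventuallyEq, ae_restrict_iff' hB] at h0
    refine hpos.ne' (measure_mono_null ?_ h0)
    rintro g ⟨hgB, hg⟩
    simp only [Set.mem_compl_iff, Set.mem_ofPred_eq, Pi.zero_apply, not_forall]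
    exact ⟨hgB, by simpa [hq, not_lt.2 hq.le] using hg⟩
  · refine ne_top_of_le_ne_top (b := ∫⁻ g in B, 1) ?_ (setLIntegral_mono measurable_const ?_)
    · simpa using measure_ball_lt_top.ne
    · intro g hg
      refine ENNReal.rpow_le_one ?_ hq.le
      rw [← ofReal_norm, ENNReal.ofReal_le_one]
      have h1 := norm_inner_le_norm (𝕜 := ℝ) u g
      have h2 : ‖g‖ < 1 := by simpa [B] using hg
      rw [hu, one_mul] at h1
      exact h1.trans h2.le
  · have hx : ‖x‖ = ‖‖x‖ • u‖ := by simp [norm_smul, hu]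
    rw [lintegral_ball_inner_eq_of_norm_eq q hx, ← lintegral_mul_const _ (by fun_prop)]
    refine lintegral_congr fun g => ?_
    rw [real_inner_smul_left, enorm_mul, enorm_norm, ENNReal.mul_rpow_of_nonneg _ _ hq.le,
      mul_comm]

end Average

section Tensor

variable {Ω : Type*} [MeasurableSpace Ω] {μ : Measure Ω}
    {K : Type*} [NormedAddCommGroup K] [InnerProductSpace ℝ K]
    {p : ℝ≥0∞} [Fact (1 ≤ p)]

lemma Lp_enorm_rpow_toReal {F : Type*} [NormedAddCommGroup F] (hp : p ≠ ⊤) (f : Lp F p μ) :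
    ‖f‖ₑ ^ p.toReal = ∫⁻ ω, ‖f ω‖ₑ ^ p.toReal ∂μ := by
  have h0 : p ≠ 0 := (zero_lt_one.trans_le (Fact.out : 1 ≤ p)).ne'
  rw [Lp.enorm_def, eLpNorm_eq_lintegral_rpow_enorm_toReal h0 hp, ← ENNReal.rpow_mul,
    one_div_mul_cancel (ENNReal.toReal_pos h0 hp).ne', ENNReal.rpow_one]

/-- The norm of an `E`-valued `Lᵖ` function is, up to the constant `c`, the `p`-average of the norms
of its scalar components. -/
lemma lintegral_enorm_innerSL_compLp (hp : p ≠ ⊤) (E : Submodule ℝ K) [FiniteDimensional ℝ E]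
    [MeasurableSpace E] [BorelSpace E] (ν : Measure E) [IsFiniteMeasure ν] (c : ℝ≥0∞)
    (hν : ∀ x : E, ∫⁻ g, ‖inner ℝ x g‖ₑ ^ p.toReal ∂ν = c * ‖x‖ₑ ^ p.toReal)
    (F : Lp K p μ) (hF : ∀ᵐ ω ∂μ, F ω ∈ E) :
    ∫⁻ g, ‖(innerSL ℝ (g : K)).compLp F‖ₑ ^ p.toReal ∂ν = c * ‖F‖ₑ ^ p.toReal := by
  have h0 : p ≠ 0 := (zero_lt_one.trans_le (Fact.out : 1 ≤ p)).ne'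
  have hq : 0 < p.toReal := ENNReal.toReal_pos h0 hp
  -- `μ` need not be σ-finite, so Tonelli's theorem is applied on a σ-finite set carrying `F`.
  obtain ⟨s, hs, hs0, hsσ⟩ := (Lp.finStronglyMeasurable F h0 hp).exists_set_sigmaFinite
  have hFm : StronglyMeasurable F := Lp.stronglyMeasurable F
  have hmeas : Measurable fun z : E × Ω => ‖inner ℝ (z.1 : K) (F z.2)‖ₑ ^ p.toReal := by
    have h1 : StronglyMeasurable fun z : E × Ω => (z.1 : K) :=
      (continuous_subtype_val.stronglyMeasurable).comp_measurable measurable_fst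
    have h2 : StronglyMeasurable fun z : E × Ω => F z.2 := hFm.comp_measurable measurable_snd
    exact (h1.inner (𝕜 := ℝ) h2).enorm.pow_const _
  have hcomp (g : E) : ‖(innerSL ℝ (g : K)).compLp F‖ₑ ^ p.toReal =
      ∫⁻ ω in s, ‖inner ℝ (g : K) (F ω)‖ₑ ^ p.toReal ∂μ := by
    rw [Lp_enorm_rpow_toReal hp, setLIntegral_eq_of_support_subset]
    · refine lintegral_congr_ae ?_
      filter_upwards [(innerSL ℝ (g : K)).coeFn_compLp F] with ω hω
      rw [hω, innerSL_apply_apply]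
    · intro ω hω
      by_contra hωs
      simp [hs0 ω hωs, hq] at hω
  simp_rw [hcomp]
  rw [lintegral_lintegral_swap hmeas.aemeasurable, Lp_enorm_rpow_toReal hp,
    ← lintegral_const_mul _ (hFm.enorm.pow_const _)]
  have hin : ∀ᵐ ω ∂μ.restrict s, ∫⁻ g : E, ‖inner ℝ (g : K) (F ω)‖ₑ ^ p.toReal ∂ν =
      c * ‖F ω‖ₑ ^ p.toReal := by
    filter_upwards [ae_restrict_of_ae hF] with ω hω
    have := hν ⟨F ω, hω⟩
    simp_rw [Submodule.coe_inner, real_inner_comm] at this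
    exact this
  rw [lintegral_congr_ae hin, setLIntegral_eq_of_support_subset]
  intro ω hω
  by_contra hωs
  simp [hs0 ω hωs, hq] at hω

open scoped TensorProduct

variable (μ K p) in
/-- The canonical map `Lᵖ(Ω) ⊗ K → Lᵖ(Ω; K)` sending `f ⊗ k` to `ω ↦ f ω • k`. -/
noncomputable def tensorToLp : Lp ℝ p μ ⊗[ℝ] K →ₗ[ℝ] Lp K p μ :=
  TensorProduct.lift <| LinearMap.mk₂ ℝ
    (fun f k => (ContinuousLinearMap.toSpanSingleton ℝ k).compLpL p μ f)
    (fun f f' k => map_add _ f f')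
    (fun a f k => map_smul _ a f)
    (fun f k k' => by
      rw [ContinuousLinearMap.toSpanSingleton_add, ContinuousLinearMap.add_compLpL]; rfl)
    (fun a f k => by
      rw [ContinuousLinearMap.toSpanSingleton_smul, ContinuousLinearMap.smul_compLpL]; rfl)

lemma coeFn_tensorToLp_tmul (f : Lp ℝ p μ) (k : K) :
    tensorToLp μ K p (f ⊗ₜ k) =ᵐ[μ] fun ω => f ω • k :=
  (ContinuousLinearMap.toSpanSingleton ℝ k).coeFn_compLp f

lemma norm_tensorToLp_tmul (f : Lp ℝ p μ) (k : K) :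
    ‖tensorToLp μ K p (f ⊗ₜ k)‖ = ‖f‖ * ‖k‖ := by
  have h : eLpNorm (tensorToLp μ K p (f ⊗ₜ k)) p μ = eLpNorm (‖k‖ • (f : Ω → ℝ)) p μ := by
    refine eLpNorm_congr_norm_ae ?_
    filter_upwards [coeFn_tensorToLp_tmul f k] with ω hω
    simp [hω, norm_smul, mul_comm]
  rw [Lp.norm_def, h, eLpNorm_const_smul, ENNReal.toReal_mul, ← Lp.norm_def]
  simp [mul_comm]

lemma exists_finiteDimensional_tensorToLp_mem (t : Lp ℝ p μ ⊗[ℝ] K) :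
    ∃ E : Submodule ℝ K, FiniteDimensional ℝ E ∧ ∀ᵐ ω ∂μ, tensorToLp μ K p t ω ∈ E := by
  induction t with
  | zero =>
    refine ⟨⊥, inferInstance, ?_⟩
    rw [map_zero]
    filter_upwards [Lp.coeFn_zero K p μ] with ω hω
    rw [hω]
    exact Submodule.zero_mem _
  | tmul f k =>
    refine ⟨Submodule.span ℝ {k}, inferInstance, ?_⟩
    filter_upwards [coeFn_tensorToLp_tmul f k] with ω hω
    rw [hω]
    exact Submodule.smul_mem _ _ (Submodule.mem_span_singleton_self k)
  | add a b ha hb =>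
    obtain ⟨A, hA, ha⟩ := ha
    obtain ⟨B, hB, hb⟩ := hb
    refine ⟨A ⊔ B, inferInstance, ?_⟩
    rw [map_add]
    filter_upwards [ha, hb, Lp.coeFn_add (tensorToLp μ K p a) (tensorToLp μ K p b)] with ω h1 h2 h3
    rw [h3]
    exact Submodule.add_mem_sup h1 h2

/-- Taking scalar components intertwines `T ⊗ I` with `T`. -/
lemma innerSL_compLp_tensorToLp_rTensor (T : Lp ℝ p μ →L[ℝ] Lp ℝ p μ) (g : K)
    (t : Lp ℝ p μ ⊗[ℝ] K) :
    (innerSL ℝ g).compLp (tensorToLp μ K p (T.toLinearMap.rTensor K t)) =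
      T ((innerSL ℝ g).compLp (tensorToLp μ K p t)) := by
  have htmul (f : Lp ℝ p μ) (k : K) :
      (innerSL ℝ g).compLp (tensorToLp μ K p (f ⊗ₜ k)) = (inner ℝ g k : ℝ) • f := by
    ext1
    filter_upwards [(innerSL ℝ g).coeFn_compLp (tensorToLp μ K p (f ⊗ₜ k)),
      coeFn_tensorToLp_tmul f k, Lp.coeFn_smul (inner ℝ g k : ℝ) f] with ω h1 h2 h3
    rw [h1, h2, h3, innerSL_apply_apply, inner_smul_right, Pi.smul_apply, smul_eq_mul, mul_comm]
  have key : ((innerSL ℝ g).compLpL p μ).toLinearMap ∘ₗ tensorToLp μ K p ∘ₗ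
        T.toLinearMap.rTensor K =
      T.toLinearMap ∘ₗ ((innerSL ℝ g).compLpL p μ).toLinearMap ∘ₗ tensorToLp μ K p := by
    refine TensorProduct.ext' fun f k => ?_
    change (innerSL ℝ g).compLp (tensorToLp μ K p (T f ⊗ₜ k)) =
      T ((innerSL ℝ g).compLp (tensorToLp μ K p (f ⊗ₜ k)))
    rw [htmul, htmul, map_smul]
  exact LinearMap.congr_fun key t

lemma norm_tensorToLp_rTensor_le (hp : p ≠ ⊤) (T : Lp ℝ p μ →L[ℝ] Lp ℝ p μ)
    (t : Lp ℝ p μ ⊗[ℝ] K) :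
    ‖tensorToLp μ K p (T.toLinearMap.rTensor K t)‖ ≤ ‖T‖ * ‖tensorToLp μ K p t‖ := by
  have h0 : p ≠ 0 := (zero_lt_one.trans_le (Fact.out : 1 ≤ p)).ne'
  have hq : 0 < p.toReal := ENNReal.toReal_pos h0 hp
  obtain ⟨A, hA, ha⟩ := exists_finiteDimensional_tensorToLp_mem t
  obtain ⟨B, hB, hb⟩ := exists_finiteDimensional_tensorToLp_mem (T.toLinearMap.rTensor K t)
  let E : Submodule ℝ K := A ⊔ B
  let _ : MeasurableSpace E := borel E
  have : BorelSpace E := ⟨rfl⟩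
  obtain ⟨ν, hνfin, c, hc0, hctop, hν⟩ := exists_measure_lintegral_inner (E := E) p.toReal hq
  have hF := lintegral_enorm_innerSL_compLp hp E ν c hν (tensorToLp μ K p t)
    (ha.mono fun ω h => Submodule.mem_sup_left h)
  have hG := lintegral_enorm_innerSL_compLp hp E ν c hν
    (tensorToLp μ K p (T.toLinearMap.rTensor K t)) (hb.mono fun ω h => Submodule.mem_sup_right h)
  have hle : c * ‖tensorToLp μ K p (T.toLinearMap.rTensor K t)‖ₑ ^ p.toReal ≤
      c * (‖T‖ₑ * ‖tensorToLp μ K p t‖ₑ) ^ p.toReal := by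
    rw [ENNReal.mul_rpow_of_nonneg _ _ hq.le, mul_left_comm, ← hF, ← hG,
      ← lintegral_const_mul' _ _ (ENNReal.rpow_ne_top_of_nonneg hq.le enorm_ne_top)]
    refine lintegral_mono fun g => ?_
    rw [innerSL_compLp_tensorToLp_rTensor, ← ENNReal.mul_rpow_of_nonneg _ _ hq.le]
    exact ENNReal.rpow_le_rpow (T.le_opENorm _) hq.le
  rw [ENNReal.mul_le_mul_iff_right hc0 hctop, ENNReal.rpow_le_rpow_iff hq] at hle
  have := ENNReal.toReal_mono (ENNReal.mul_ne_top enorm_ne_top enorm_ne_top) hle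
  simpa [ENNReal.toReal_mul] using this

lemma denseRange_tensorToLp (hp : p ≠ ⊤) : DenseRange (tensorToLp μ K p) := by
  intro F
  rw [← LinearMap.coe_range, ← Submodule.topologicalClosure_coe, SetLike.mem_coe]
  induction F using Lp.induction hp with
  | @indicatorConst c s hs hμs =>
    refine Submodule.le_topologicalClosure _
      ⟨indicatorConstLp p hs hμs.ne (1 : ℝ) ⊗ₜ c, ?_⟩
    rw [Lp.simpleFunc.coe_indicatorConst]
    ext1
    filter_upwards [coeFn_tensorToLp_tmul (indicatorConstLp p hs hμs.ne (1 : ℝ)) c,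
      indicatorConstLp_coeFn (p := p) (hs := hs) (hμs := hμs.ne) (c := (1 : ℝ)),
      indicatorConstLp_coeFn (p := p) (hs := hs) (hμs := hμs.ne) (c := c)] with ω h1 h2 h3
    rw [h1, h2, h3]
    by_cases hω : ω ∈ s <;> simp [hω]
  | add hf hg _ h1 h2 => exact Submodule.add_mem _ h1 h2
  | isClosed => exact Submodule.isClosed_topologicalClosure _

end Tensor

/-- Hilbert-valued tensor extension of an `Lᵖ`-bounded operator: for `1 ≤ p < ∞`,
a Hilbert space `K`, and a bounded operator `T` on `Lᵖ(Ω)`, the map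
`f ⊗ k ↦ (Tf) ⊗ k` extends to a bounded operator `S` on `Lᵖ(Ω; K)` with
`‖S‖ = ‖T‖`. -/
theorem stmt_8 {Ω : Type*} [MeasurableSpace Ω] (μ : Measure Ω)
    {K : Type*} [NormedAddCommGroup K] [InnerProductSpace ℝ K] [CompleteSpace K]
    [Nontrivial K]
    (p : ℝ≥0∞) [Fact (1 ≤ p)] (hp : p ≠ ⊤)
    (T : Lp ℝ p μ →L[ℝ] Lp ℝ p μ) :
    ∃ S : Lp K p μ →L[ℝ] Lp K p μ, ‖S‖ = ‖T‖ ∧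
      ∀ (f : Lp ℝ p μ) (k : K) (g h : Lp K p μ),
        (g : Ω → K) =ᵐ[μ] (fun ω => (f : Ω → ℝ) ω • k) →
        (h : Ω → K) =ᵐ[μ] (fun ω => (T f : Ω → ℝ) ω • k) →
        S g = h := by
  let J := tensorToLp μ K p
  let J' := J ∘ₗ T.toLinearMap.rTensor K
  have hdense : DenseRange J := denseRange_tensorToLp hp
  have hbound : ∀ t, ‖J' t‖ ≤ ‖T‖ * ‖J t‖ := norm_tensorToLp_rTensor_le hp T
  let S := J'.extendOfNorm J
  have hS (f : Lp ℝ p μ) (k : K) : S (J (f ⊗ₜ k)) = J (T f ⊗ₜ k) :=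
    LinearMap.extendOfNorm_eq hdense ⟨_, hbound⟩ (f ⊗ₜ k)
  refine ⟨S, le_antisymm ?_ ?_, fun f k g h hg hh => ?_⟩
  · exact LinearMap.opNorm_extendOfNorm_le hdense (norm_nonneg _) hbound
  · obtain ⟨k, hk⟩ := exists_norm_eq K zero_le_one
    refine T.opNorm_le_bound (norm_nonneg S) fun f => ?_
    have := S.le_opNorm (J (f ⊗ₜ k))
    rw [hS] at this
    simpa only [J, norm_tensorToLp_tmul, hk, mul_one] using this
  · have h1 : g = J (f ⊗ₜ k) := Lp.ext (hg.trans (coeFn_tensorToLp_tmul f k).symm)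
    have h2 : h = J (T f ⊗ₜ k) := Lp.ext (hh.trans (coeFn_tensorToLp_tmul (T f) k).symm)
    rw [h1, h2, hS]
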